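/- arXiv:0912.1518 — 7 statements merged into one kernel-verified Lean document; each statement's English description precedes it below -/
import Mathlib

section
/- Let m_1, l_2, m_2 be positive integers with m_1 < l_2 ≤ m_2. Then the number of subsets X of [1,m_1] ∪ [l_2,m_2] such that l_2 ∈ X and gcd(X) = 1 equals Σ_{d | l_2} μ(d) · 2^{⌊m_1/d⌋ + ⌊m_2/d⌋ − l_2/d}. -/
theorem aux_mu (n : ℕ) (hn : n ≠ 0) :
    ∑ d ∈ n.divisors, ArithmeticFunction.moebius d = if n = 1 then 1 else 0 := by
  rw [← ArithmeticFunction.coe_mul_zeta_apply, ArithmeticFunction.moebius_mul_coe_zeta,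
    ArithmeticFunction.one_apply]

theorem aux_Ioc (a b d : ℕ) (h : a ≤ b) :
    ((Finset.Ioc a b).filter (fun x => d ∣ x)).card = b / d - a / d := by
  have h0 := Nat.Ioc_filter_dvd_card_eq_div b d
  have h1 := Nat.Ioc_filter_dvd_card_eq_div a d
  have hu : Finset.Ioc 0 b = Finset.Ioc 0 a ∪ Finset.Ioc a b :=
    (Finset.Ioc_union_Ioc_eq_Ioc (Nat.zero_le a) h).symm
  rw [hu, Finset.filter_union, Finset.card_union_of_disjoint] at h0
  · omega
  · rw [Finset.disjoint_left]
    intro x hx hy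
    simp only [Finset.mem_filter, Finset.mem_Ioc] at hx hy
    omega

theorem aux_count (m₁ l₂ m₂ d : ℕ) (h₁ : m₁ < l₂) (h₂ : l₂ ≤ m₂) (hd : d ∣ l₂) :
    (((Finset.Icc 1 m₁ ∪ Finset.Icc l₂ m₂).powerset).filter
        (fun X : Finset ℕ => l₂ ∈ X ∧ d ∣ X.gcd id)).card
      = 2 ^ (m₁ / d + m₂ / d - l₂ / d) := by
  have hT : (((Finset.Ioc 0 m₁).filter (fun x => d ∣ x)) ∪
      ((Finset.Ioc l₂ m₂).filter (fun x => d ∣ x))).card = m₁ / d + m₂ / d - l₂ / d := by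
    rw [Finset.card_union_of_disjoint, aux_Ioc _ _ _ h₂, aux_Ioc _ _ _ (Nat.zero_le _)]
    · have := Nat.div_le_div_right (c := d) h₂
      rw [Nat.zero_div, Nat.sub_zero, Nat.add_sub_assoc this]
    · rw [Finset.disjoint_left]
      intro x hx hy
      simp only [Finset.mem_filter, Finset.mem_Ioc] at hx hy
      omega
  rw [← hT, ← Finset.card_powerset]
  refine Finset.card_bij' (fun X _ => X.erase l₂) (fun Y _ => insert l₂ Y) ?_ ?_ ?_ ?_
  · intro X hX
    simp only [Finset.mem_filter, Finset.mem_powerset, Finset.dvd_gcd_iff, id] at hX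
    obtain ⟨hX, hl, hg⟩ := hX
    rw [Finset.mem_powerset]
    intro x hx
    rw [Finset.mem_erase] at hx
    have h3 := hX hx.2
    have h4 := hg x hx.2
    simp only [Finset.mem_union, Finset.mem_filter, Finset.mem_Ioc, Finset.mem_Icc] at h3 ⊢
    have h5 := hx.1
    simp only [h4, and_true]
    omega
  · intro Y hY
    rw [Finset.mem_powerset] at hY
    simp only [Finset.mem_filter, Finset.mem_powerset, Finset.dvd_gcd_iff, id]
    refine ⟨?_, Finset.mem_insert_self _ _, ?_⟩
    · intro x hx
      rw [Finset.mem_insert] at hx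
      simp only [Finset.mem_union, Finset.mem_Icc]
      rcases hx with rfl | hx
      · omega
      · have := hY hx
        simp only [Finset.mem_union, Finset.mem_filter, Finset.mem_Ioc] at this
        omega
    · intro x hx
      rw [Finset.mem_insert] at hx
      rcases hx with rfl | hx
      · exact hd
      · have := hY hx
        simp only [Finset.mem_union, Finset.mem_filter] at this
        tauto
  · intro X hX
    simp only [Finset.mem_filter] at hX
    exact Finset.insert_erase hX.2.1
  · intro Y hY
    rw [Finset.mem_powerset] at hY
    apply Finset.erase_insert
    intro hx
    have := hY hx
    simp only [Finset.mem_union, Finset.mem_filter, Finset.mem_Ioc] at this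
    omega

/-- Lemma 1(a): the number of relatively prime subsets of `[1,m₁] ∪ [l₂,m₂]`
containing `l₂` equals `∑_{d ∣ l₂} μ(d) 2^{⌊m₁/d⌋ + ⌊m₂/d⌋ - l₂/d}`. -/
theorem stmt_1 (m₁ l₂ m₂ : ℕ) (hm₁ : 0 < m₁) (h₁ : m₁ < l₂) (h₂ : l₂ ≤ m₂) :
    ((((Finset.Icc 1 m₁ ∪ Finset.Icc l₂ m₂).powerset).filter
        (fun X : Finset ℕ => l₂ ∈ X ∧ X.gcd id = 1)).card : ℤ)
      = ∑ d ∈ l₂.divisors,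
          (ArithmeticFunction.moebius d) * 2 ^ (m₁ / d + m₂ / d - l₂ / d) := by
  have hl : l₂ ≠ 0 := by omega
  have hR : ∀ d ∈ l₂.divisors,
      (ArithmeticFunction.moebius d) * 2 ^ (m₁ / d + m₂ / d - l₂ / d) =
      ∑ X ∈ ((Finset.Icc 1 m₁ ∪ Finset.Icc l₂ m₂).powerset).filter (fun X => l₂ ∈ X),
        if d ∣ X.gcd id then ArithmeticFunction.moebius d else 0 := by
    intro d hd
    have hc := aux_count m₁ l₂ m₂ d h₁ h₂ (Nat.dvd_of_mem_divisors hd)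
    rw [← Finset.sum_filter, Finset.sum_const, Finset.filter_filter, hc, nsmul_eq_mul, mul_comm]
    push_cast
    rfl
  rw [Finset.sum_congr rfl hR, Finset.sum_comm, ← Finset.filter_filter, Finset.card_filter]
  push_cast
  refine Finset.sum_congr rfl fun X hX => ?_
  rw [Finset.mem_filter] at hX
  have hg : X.gcd id ∣ l₂ := Finset.gcd_dvd hX.2
  have hg0 : X.gcd id ≠ 0 := fun h => hl (by rw [h] at hg; exact Nat.eq_zero_of_zero_dvd hg)
  rw [← aux_mu _ hg0, ← Finset.sum_filter]
  refine Finset.sum_congr ?_ fun _ _ => rfl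
  ext d
  simp only [Finset.mem_filter, Nat.mem_divisors]
  exact ⟨fun h => ⟨⟨h.1.trans hg, hl⟩, h.1⟩, fun h => ⟨h.2, hg0⟩⟩
end

section
/- Let m_1, l_2, m_2, k be positive integers with m_1 < l_2 ≤ m_2. Then the number of subsets X of [1,m_1] ∪ [l_2,m_2] such that l_2 ∈ X, |X| = k, and gcd(X) = 1 equals Σ_{d | l_2} μ(d) · C(⌊m_1/d⌋ + ⌊m_2/d⌋ − l_2/d, k−1), where C(·,·) denotes the binomial coefficient. -/
theorem card_aux (m₁ l₂ m₂ d : ℕ) (hd : d ∣ l₂) (h₁ : m₁ < l₂) (h₂ : l₂ ≤ m₂) :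
    (((Finset.Icc 1 m₁ ∪ Finset.Icc l₂ m₂).filter (fun x => d ∣ x)).erase l₂).card
      = m₁ / d + m₂ / d - l₂ / d := by
  have e1 : ((Finset.Icc 1 m₁ ∪ Finset.Icc l₂ m₂).filter (fun x => d ∣ x)).erase l₂
      = (Finset.Ioc 0 m₁).filter (fun x => d ∣ x) ∪
        (Finset.Ioc l₂ m₂).filter (fun x => d ∣ x) := by
    ext x
    simp only [Finset.mem_erase, Finset.mem_filter, Finset.mem_union, Finset.mem_Icc,
      Finset.mem_Ioc]
    by_cases hx : d ∣ x <;> simp only [hx, and_true, and_false, or_self]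
    omega
  have e2 : (Finset.Ioc 0 m₂).filter (fun x => d ∣ x)
      = (Finset.Ioc 0 l₂).filter (fun x => d ∣ x) ∪
        (Finset.Ioc l₂ m₂).filter (fun x => d ∣ x) := by
    ext x
    simp only [Finset.mem_filter, Finset.mem_union, Finset.mem_Ioc]
    by_cases hx : d ∣ x <;> simp only [hx, and_true, and_false, or_self]
    omega
  have c2 := congrArg Finset.card e2
  rw [Finset.card_union_of_disjoint, Nat.Ioc_filter_dvd_card_eq_div,
    Nat.Ioc_filter_dvd_card_eq_div] at c2
  · rw [e1, Finset.card_union_of_disjoint, Nat.Ioc_filter_dvd_card_eq_div, c2]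
    · generalize m₁ / d = a, l₂ / d = b
      omega
    · rw [Finset.disjoint_left]
      intro x
      simp only [Finset.mem_filter, Finset.mem_Ioc]
      omega
  · rw [Finset.disjoint_left]
    intro x
    simp only [Finset.mem_filter, Finset.mem_Ioc]
    omega

theorem count_aux (A : Finset ℕ) (l d k : ℕ) (hd : d ∣ l) (hl : l ∈ A) (hk : 0 < k) :
    (A.powerset.filter (fun X : Finset ℕ => (l ∈ X ∧ X.card = k) ∧ d ∣ X.gcd id)).card
      = Nat.choose ((A.filter (fun x => d ∣ x)).erase l).card (k - 1) := by
  rw [← Finset.card_powersetCard]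
  refine Finset.card_bij' (fun X _ => X.erase l) (fun Y _ => insert l Y) ?_ ?_ ?_ ?_
  · intro X hX
    simp only [Finset.mem_filter, Finset.mem_powerset, Finset.dvd_gcd_iff, id] at hX
    obtain ⟨hA, ⟨hlX, hc⟩, hg⟩ := hX
    rw [Finset.mem_powersetCard, Finset.card_erase_of_mem hlX, hc]
    refine ⟨Finset.erase_subset_erase _ ?_, rfl⟩
    intro x hx
    exact Finset.mem_filter.2 ⟨hA hx, hg x hx⟩
  · intro Y hY
    rw [Finset.mem_powersetCard] at hY
    obtain ⟨hs, hc⟩ := hY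
    have hn : l ∉ Y := fun h => by simpa using hs h
    have hs' : ∀ x ∈ Y, x ∈ A ∧ d ∣ x := fun x hx =>
      Finset.mem_filter.1 (Finset.mem_of_mem_erase (hs hx))
    simp only [Finset.mem_filter, Finset.mem_powerset, Finset.dvd_gcd_iff, id]
    refine ⟨Finset.insert_subset hl fun x hx => (hs' x hx).1,
      ⟨Finset.mem_insert_self _ _, ?_⟩, ?_⟩
    · rw [Finset.card_insert_of_notMem hn]; omega
    · intro x hx
      rcases Finset.mem_insert.1 hx with rfl | hx
      · exact hd
      · exact (hs' x hx).2
  · intro X hX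
    exact Finset.insert_erase (Finset.mem_filter.1 hX).2.1.1
  · intro Y hY
    have hs := (Finset.mem_powersetCard.1 hY).1
    exact Finset.erase_insert fun h => by simpa using hs h

theorem moebius_aux (l g : ℕ) (hl : l ≠ 0) (hg : g ∣ l) :
    (∑ d ∈ l.divisors, if d ∣ g then ArithmeticFunction.moebius d else 0)
      = if g = 1 then (1 : ℤ) else 0 := by
  have hg0 : g ≠ 0 := fun h => hl (by simpa [h] using hg)
  rw [← Finset.sum_filter]
  have : l.divisors.filter (fun d => d ∣ g) = g.divisors := by
    ext d
    simp only [Finset.mem_filter, Nat.mem_divisors]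
    exact ⟨fun h => ⟨h.2, hg0⟩, fun h => ⟨⟨h.1.trans hg, hl⟩, h.1⟩⟩
  rw [this, ← ArithmeticFunction.coe_zeta_mul_apply, ArithmeticFunction.coe_zeta_mul_moebius,
    ArithmeticFunction.one_apply]


/-- Lemma 1(b): the number of `k`-element relatively prime subsets of
`[1,m₁] ∪ [l₂,m₂]` containing `l₂` equals
`∑_{d ∣ l₂} μ(d) C(⌊m₁/d⌋ + ⌊m₂/d⌋ - l₂/d, k-1)`. -/
theorem stmt_2 (m₁ l₂ m₂ k : ℕ) (hm₁ : 0 < m₁) (hk : 0 < k)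
    (h₁ : m₁ < l₂) (h₂ : l₂ ≤ m₂) :
    ((((Finset.Icc 1 m₁ ∪ Finset.Icc l₂ m₂).powerset).filter
        (fun X : Finset ℕ => l₂ ∈ X ∧ X.card = k ∧ X.gcd id = 1)).card : ℤ)
      = ∑ d ∈ l₂.divisors,
          (ArithmeticFunction.moebius d) *
            (Nat.choose (m₁ / d + m₂ / d - l₂ / d) (k - 1)) := by

  have hlA : l₂ ∈ Finset.Icc 1 m₁ ∪ Finset.Icc l₂ m₂ := by
    simp [h₂]
  have key : ∀ d ∈ l₂.divisors, (ArithmeticFunction.moebius d) *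
      ((Nat.choose (m₁ / d + m₂ / d - l₂ / d) (k - 1) : ℕ) : ℤ)
      = ∑ X ∈ ((Finset.Icc 1 m₁ ∪ Finset.Icc l₂ m₂).powerset).filter
        (fun X : Finset ℕ => l₂ ∈ X ∧ X.card = k),
        if d ∣ X.gcd id then ArithmeticFunction.moebius d else 0 := by
    intro d hd
    have hd := Nat.dvd_of_mem_divisors hd
    rw [← card_aux m₁ l₂ m₂ d hd h₁ h₂, ← count_aux _ l₂ d k hd hlA hk, ← Finset.sum_filter,
      Finset.filter_filter, Finset.sum_const, nsmul_eq_mul, mul_comm]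
  rw [Finset.sum_congr rfl key, Finset.sum_comm]
  have key2 : ∀ X ∈ ((Finset.Icc 1 m₁ ∪ Finset.Icc l₂ m₂).powerset).filter
        (fun X : Finset ℕ => l₂ ∈ X ∧ X.card = k),
      (∑ d ∈ l₂.divisors, if d ∣ X.gcd id then ArithmeticFunction.moebius d else 0)
        = if X.gcd id = 1 then (1 : ℤ) else 0 := by
    intro X hX
    exact moebius_aux _ _ (by omega) (Finset.gcd_dvd (f := id) (Finset.mem_filter.1 hX).2.1)
  rw [Finset.sum_congr rfl key2, Finset.sum_boole, Finset.filter_filter]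
  simp only [and_assoc]
end

section
/- Let l_1, m_1, l_2, m_2 be positive integers with l_1 ≤ m_1 < l_2 ≤ m_2. Then the number of subsets X of [l_1,m_1] ∪ [l_2,m_2] such that l_1 ∈ X, l_2 ∈ X, and gcd(X) = 1 equals Σ_{d | gcd(l_1,l_2)} μ(d) · 2^{⌊m_1/d⌋ + ⌊m_2/d⌋ − (l_1+l_2)/d}. -/
theorem aux_card (l m d : ℕ) (hd : 0 < d) (hdl : d ∣ l) :
    ((Finset.Icc l m).filter (d ∣ ·)).card = m / d + 1 - l / d := by
  obtain ⟨k, rfl⟩ := hdl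
  have : (Finset.Icc (d * k) m).filter (d ∣ ·)
      = (Finset.Icc k (m / d)).image (fun x => d * x) := by
    ext x
    simp only [Finset.mem_filter, Finset.mem_Icc, Finset.mem_image]
    constructor
    · rintro ⟨⟨h1, h2⟩, y, rfl⟩
      refine ⟨y, ⟨Nat.le_of_mul_le_mul_left h1 hd, ?_⟩, rfl⟩
      rw [Nat.le_div_iff_mul_le hd, mul_comm]
      exact h2
    · rintro ⟨y, ⟨h1, h2⟩, rfl⟩
      rw [Nat.le_div_iff_mul_le hd, mul_comm] at h2
      exact ⟨⟨Nat.mul_le_mul_left d h1, h2⟩, dvd_mul_right d y⟩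
  rw [this, Finset.card_image_of_injective _ (fun a b h => Nat.eq_of_mul_eq_mul_left hd h),
    Nat.card_Icc, Nat.mul_div_cancel_left k hd]

theorem aux_moebius (n : ℕ) :
    ∑ d ∈ n.divisors, ArithmeticFunction.moebius d = if n = 1 then 1 else 0 := by
  rw [← ArithmeticFunction.coe_mul_zeta_apply, ArithmeticFunction.moebius_mul_coe_zeta,
    ArithmeticFunction.one_apply]

/-- Lemma 3(a): the number of relatively prime subsets of `[l₁,m₁] ∪ [l₂,m₂]`
containing both `l₁` and `l₂` equals
`∑_{d ∣ gcd(l₁,l₂)} μ(d) 2^{⌊m₁/d⌋ + ⌊m₂/d⌋ - (l₁+l₂)/d}`. -/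
theorem stmt_5 (l₁ m₁ l₂ m₂ : ℕ) (hl₁ : 0 < l₁)
    (h₁ : l₁ ≤ m₁) (h₂ : m₁ < l₂) (h₃ : l₂ ≤ m₂) :
    ((((Finset.Icc l₁ m₁ ∪ Finset.Icc l₂ m₂).powerset).filter
        (fun X : Finset ℕ => l₁ ∈ X ∧ l₂ ∈ X ∧ X.gcd id = 1)).card : ℤ)
      = ∑ d ∈ (Nat.gcd l₁ l₂).divisors,
          (ArithmeticFunction.moebius d) *
            2 ^ (m₁ / d + m₂ / d - (l₁ + l₂) / d) := by
  set U := Finset.Icc l₁ m₁ ∪ Finset.Icc l₂ m₂ with hU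
  have hg : Nat.gcd l₁ l₂ ≠ 0 := (Nat.gcd_pos_of_pos_left _ hl₁).ne'
  have e1 : U.powerset.filter (fun X : Finset ℕ => l₁ ∈ X ∧ l₂ ∈ X ∧ X.gcd id = 1)
      = (U.powerset.filter (fun X : Finset ℕ => l₁ ∈ X ∧ l₂ ∈ X)).filter
          (fun X => X.gcd id = 1) := by
    rw [Finset.filter_filter]
    simp only [and_assoc]
  rw [e1, Finset.card_filter]
  push_cast
  have e2 : ∀ X ∈ U.powerset.filter (fun X : Finset ℕ => l₁ ∈ X ∧ l₂ ∈ X),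
      (if X.gcd id = 1 then (1 : ℤ) else 0)
        = ∑ d ∈ (Nat.gcd l₁ l₂).divisors,
            if d ∣ X.gcd id then ArithmeticFunction.moebius d else 0 := by
    intro X hX
    simp only [Finset.mem_filter] at hX
    have hdvd : X.gcd id ∣ Nat.gcd l₁ l₂ :=
      Nat.dvd_gcd (Finset.gcd_dvd (f := id) hX.2.1) (Finset.gcd_dvd (f := id) hX.2.2)
    rw [← aux_moebius, ← Finset.sum_filter, Nat.divisors_filter_dvd_of_dvd hg hdvd]
  rw [Finset.sum_congr rfl e2, Finset.sum_comm]
  refine Finset.sum_congr rfl fun d hd => ?_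
  have hdg := Nat.dvd_of_mem_divisors hd
  have hd0 : 0 < d := Nat.pos_of_mem_divisors hd
  have hd1 : d ∣ l₁ := hdg.trans (Nat.gcd_dvd_left _ _)
  have hd2 : d ∣ l₂ := hdg.trans (Nat.gcd_dvd_right _ _)
  rw [← Finset.sum_filter, Finset.sum_const, nsmul_eq_mul, mul_comm]
  congr 1
  have e3 : (U.powerset.filter (fun X : Finset ℕ => l₁ ∈ X ∧ l₂ ∈ X)).filter
      (fun X => d ∣ X.gcd id) = Finset.Icc {l₁, l₂} (U.filter (d ∣ ·)) := by
    ext X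
    simp only [Finset.mem_filter, Finset.mem_powerset, Finset.mem_Icc, Finset.le_eq_subset,
      Finset.dvd_gcd_iff, id, Finset.insert_subset_iff, Finset.singleton_subset_iff,
      Finset.subset_iff]
    grind
  have hsub : ({l₁, l₂} : Finset ℕ) ⊆ U.filter (d ∣ ·) := by
    intro x hx
    simp only [Finset.mem_insert, Finset.mem_singleton] at hx
    simp only [hU, Finset.mem_filter, Finset.mem_union, Finset.mem_Icc]
    rcases hx with rfl | rfl
    · exact ⟨Or.inl ⟨le_rfl, h₁⟩, hd1⟩
    · exact ⟨Or.inr ⟨le_rfl, h₃⟩, hd2⟩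
  have hdis : Disjoint ((Finset.Icc l₁ m₁).filter (d ∣ ·)) ((Finset.Icc l₂ m₂).filter (d ∣ ·)) := by
    rw [Finset.disjoint_left]
    intro x hx hy
    simp only [Finset.mem_filter, Finset.mem_Icc] at hx hy
    omega
  rw [e3, Finset.card_Icc_finset hsub, hU, Finset.filter_union, Finset.card_union_of_disjoint hdis,
    aux_card _ _ _ hd0 hd1, aux_card _ _ _ hd0 hd2, Finset.card_pair (by omega)]
  push_cast
  congr 1
  rw [Nat.add_div_of_dvd_right hd1]
  have := Nat.div_le_div_right (c := d) h₁
  have := Nat.div_le_div_right (c := d) h₃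
  omega
end

section
/- Let m_1, l_2, m_2 be positive integers with m_1 < l_2 ≤ m_2. Then f([1,m_1] ∪ [l_2,m_2]) = Σ_{d=1}^{m_2} μ(d) · (2^{⌊m_1/d⌋ + ⌊m_2/d⌋ − ⌊(l_2−1)/d⌋} − 1). -/
theorem card_filter_dvd_aux (m₁ l₂ m₂ d : ℕ) (h₁ : m₁ < l₂) (h₂ : l₂ ≤ m₂) :
    ((Finset.Icc 1 m₁ ∪ Finset.Icc l₂ m₂).filter (fun x => d ∣ x)).card
      = m₁ / d + m₂ / d - (l₂ - 1) / d := by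
  have e1 := Nat.Ioc_filter_dvd_card_eq_div m₁ d
  have e2 := Nat.Ioc_filter_dvd_card_eq_div m₂ d
  have e3 := Nat.Ioc_filter_dvd_card_eq_div (l₂ - 1) d
  have hI : Finset.Icc 1 m₁ = Finset.Ioc 0 m₁ := by ext x; simp; omega
  have hU : Finset.Ioc 0 m₂ = Finset.Ioc 0 (l₂ - 1) ∪ Finset.Icc l₂ m₂ := by
    ext x; simp; omega
  have hd1 : Disjoint (Finset.Ioc 0 (l₂ - 1)) (Finset.Icc l₂ m₂) := by
    rw [Finset.disjoint_left]; intro x; simp; omega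
  have hd2 : Disjoint (Finset.Ioc 0 m₁) (Finset.Icc l₂ m₂) := by
    rw [Finset.disjoint_left]; intro x; simp; omega
  rw [hU, Finset.filter_union, Finset.card_union_of_disjoint
    (Finset.disjoint_filter_filter hd1)] at e2
  rw [hI, Finset.filter_union, Finset.card_union_of_disjoint
    (Finset.disjoint_filter_filter hd2)]
  omega

theorem card_subsets_aux (A : Finset ℕ) (d : ℕ) :
    ((((A.powerset).filter (fun X : Finset ℕ => X.Nonempty)).filter
      (fun X => d ∣ X.gcd id)).card : ℤ) = 2 ^ (A.filter (fun x => d ∣ x)).card - 1 := by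
  have : ((A.powerset).filter (fun X : Finset ℕ => X.Nonempty)).filter
      (fun X => d ∣ X.gcd id) = ((A.filter (fun x => d ∣ x)).powerset).erase ∅ := by
    ext X
    simp only [Finset.mem_filter, Finset.mem_powerset, Finset.mem_erase, Finset.dvd_gcd_iff,
      Finset.subset_iff, id, Finset.nonempty_iff_ne_empty]
    constructor
    · rintro ⟨⟨a, b⟩, c⟩
      exact ⟨b, fun x hx => ⟨a hx, c x hx⟩⟩
    · rintro ⟨b, a⟩
      exact ⟨⟨fun x hx => (a hx).1, b⟩, fun x hx => (a hx).2⟩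
  rw [this, Finset.card_erase_of_mem (by simp), Finset.card_powerset,
    Nat.cast_sub Nat.one_le_two_pow]
  simp

/-- Theorem (special case): `f([1,m₁] ∪ [l₂,m₂]) =
∑_{d=1}^{m₂} μ(d) (2^{⌊m₁/d⌋ + ⌊m₂/d⌋ - ⌊(l₂-1)/d⌋} - 1)`, where `f(A)` counts
the nonempty relatively prime subsets of `A`. -/
theorem stmt_7 (m₁ l₂ m₂ : ℕ) (hm₁ : 0 < m₁) (h₁ : m₁ < l₂) (h₂ : l₂ ≤ m₂) :
    ((((Finset.Icc 1 m₁ ∪ Finset.Icc l₂ m₂).powerset).filter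
        (fun X : Finset ℕ => X.Nonempty ∧ X.gcd id = 1)).card : ℤ)
      = ∑ d ∈ Finset.Icc 1 m₂,
          (ArithmeticFunction.moebius d) *
            (2 ^ (m₁ / d + m₂ / d - (l₂ - 1) / d) - 1) := by
  rw [← Finset.filter_filter, Finset.card_filter]
  push_cast
  have key : ∀ X ∈ ((Finset.Icc 1 m₁ ∪ Finset.Icc l₂ m₂).powerset).filter
      (fun X : Finset ℕ => X.Nonempty),
      (if X.gcd id = 1 then (1 : ℤ) else 0)
        = ∑ d ∈ Finset.Icc 1 m₂, if d ∣ X.gcd id then ArithmeticFunction.moebius d else 0 := by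
    intro X hX
    simp only [Finset.mem_filter, Finset.mem_powerset] at hX
    obtain ⟨hs, x, hx⟩ := hX
    have hxA := hs hx
    simp only [Finset.mem_union, Finset.mem_Icc] at hxA
    have hdx : X.gcd id ∣ x := Finset.gcd_dvd (f := id) hx
    have hpos : 0 < X.gcd id := Nat.pos_of_dvd_of_pos hdx (by omega)
    have hle : X.gcd id ≤ m₂ := (Nat.le_of_dvd (by omega) hdx).trans (by omega)
    rw [← Finset.sum_filter]
    have hD : (Finset.Icc 1 m₂).filter (fun d => d ∣ X.gcd id) = (X.gcd id).divisors := by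
      ext d
      simp only [Finset.mem_filter, Finset.mem_Icc, Nat.mem_divisors]
      constructor
      · rintro ⟨_, h⟩
        exact ⟨h, hpos.ne'⟩
      · rintro ⟨h, _⟩
        exact ⟨⟨Nat.pos_of_dvd_of_pos h hpos, (Nat.le_of_dvd hpos h).trans hle⟩, h⟩
    rw [hD, ← ArithmeticFunction.coe_mul_zeta_apply, ArithmeticFunction.moebius_mul_coe_zeta,
      ArithmeticFunction.one_apply]
  rw [Finset.sum_congr rfl key, Finset.sum_comm]
  refine Finset.sum_congr rfl fun d _ => ?_
  rw [← card_filter_dvd_aux m₁ l₂ m₂ d h₁ h₂, ← card_subsets_aux, ← Finset.sum_filter,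
    Finset.sum_const, nsmul_eq_mul, mul_comm]
end

section
/- Let l_1, m_1, l_2, m_2, k be positive integers with l_1 ≤ m_1 < l_2 ≤ m_2. Then f_k([l_1,m_1] ∪ [l_2,m_2]) = Σ_{d=1}^{m_2} μ(d) · C(⌊m_1/d⌋ + ⌊m_2/d⌋ − ⌊(l_1−1)/d⌋ − ⌊(l_2−1)/d⌋, k), where C(·,·) denotes the binomial coefficient. -/
theorem aux_sum_moebius (n N : ℕ) (hn : 0 < n) (hN : n ≤ N) :
    (∑ d ∈ Finset.Icc 1 N, if d ∣ n then ArithmeticFunction.moebius d else 0)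
      = if n = 1 then (1 : ℤ) else 0 := by
  have h := congrArg (fun f : ArithmeticFunction ℤ => f n) ArithmeticFunction.coe_zeta_mul_moebius
  simp only [ArithmeticFunction.coe_zeta_mul_apply, ArithmeticFunction.one_apply] at h
  rw [← h, ← Finset.sum_filter]
  apply Finset.sum_congr _ (fun _ _ => rfl)
  ext d
  simp only [Finset.mem_filter, Finset.mem_Icc, Nat.mem_divisors]
  constructor
  · rintro ⟨_, h⟩
    exact ⟨h, hn.ne'⟩
  · rintro ⟨h, _⟩
    exact ⟨⟨Nat.pos_of_dvd_of_pos h hn, (Nat.le_of_dvd hn h).trans hN⟩, h⟩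

theorem aux_count_s10 (l m d : ℕ) (hl : 0 < l) (h : l ≤ m) :
    ((Finset.Icc l m).filter (fun x => d ∣ x)).card + (l - 1) / d = m / d := by
  rw [← Nat.Ioc_filter_dvd_card_eq_div (l - 1) d, ← Nat.Ioc_filter_dvd_card_eq_div m d,
    ← Finset.card_union_of_disjoint, ← Finset.filter_union]
  · congr 2
    ext x
    simp only [Finset.mem_union, Finset.mem_Icc, Finset.mem_Ioc]
    omega
  · rw [Finset.disjoint_left]
    intro x hx hy
    simp only [Finset.mem_filter, Finset.mem_Icc, Finset.mem_Ioc] at hx hy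
    omega

/-- Main theorem (b): `f_k([l₁,m₁] ∪ [l₂,m₂]) =
∑_{d=1}^{m₂} μ(d) C(⌊m₁/d⌋ + ⌊m₂/d⌋ - ⌊(l₁-1)/d⌋ - ⌊(l₂-1)/d⌋, k)`, where
`f_k(A)` counts the `k`-element relatively prime subsets of `A`. -/
theorem stmt_10 (l₁ m₁ l₂ m₂ k : ℕ) (hl₁ : 0 < l₁) (hk : 0 < k)
    (h₁ : l₁ ≤ m₁) (h₂ : m₁ < l₂) (h₃ : l₂ ≤ m₂) :
    ((((Finset.Icc l₁ m₁ ∪ Finset.Icc l₂ m₂).powerset).filter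
        (fun X : Finset ℕ => X.card = k ∧ X.gcd id = 1)).card : ℤ)
      = ∑ d ∈ Finset.Icc 1 m₂,
          (ArithmeticFunction.moebius d) *
            (Nat.choose (m₁ / d + m₂ / d - (l₁ - 1) / d - (l₂ - 1) / d) k) := by
  have hc : ∀ d, m₁ / d + m₂ / d - (l₁ - 1) / d - (l₂ - 1) / d =
      ((Finset.Icc l₁ m₁ ∪ Finset.Icc l₂ m₂).filter (fun x => d ∣ x)).card := by
    intro d
    have e1 := aux_count_s10 l₁ m₁ d hl₁ h₁
    have e2 := aux_count_s10 l₂ m₂ d (by omega) h₃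
    rw [Finset.filter_union, Finset.card_union_of_disjoint]
    · omega
    · rw [Finset.disjoint_left]
      intro x hx hy
      simp only [Finset.mem_filter, Finset.mem_Icc] at hx hy
      omega
  have hA : ∀ x ∈ Finset.Icc l₁ m₁ ∪ Finset.Icc l₂ m₂, 0 < x ∧ x ≤ m₂ := by
    intro x hx
    simp only [Finset.mem_union, Finset.mem_Icc] at hx
    omega
  simp only [hc]
  generalize Finset.Icc l₁ m₁ ∪ Finset.Icc l₂ m₂ = A at hA
  have e : A.powerset.filter (fun X : Finset ℕ => X.card = k ∧ X.gcd id = 1)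
      = (A.powersetCard k).filter (fun X : Finset ℕ => X.gcd id = 1) := by
    ext X
    simp only [Finset.mem_filter, Finset.mem_powerset, Finset.mem_powersetCard]
    tauto
  rw [e, Finset.card_filter, Nat.cast_sum]
  have e2 : ∀ X ∈ A.powersetCard k, (((if X.gcd id = 1 then 1 else 0 : ℕ)) : ℤ)
      = ∑ d ∈ Finset.Icc 1 m₂, if d ∣ X.gcd id then ArithmeticFunction.moebius d else 0 := by
    intro X hX
    rw [Finset.mem_powersetCard] at hX
    obtain ⟨x, hx⟩ : X.Nonempty := by
      rw [← Finset.card_pos]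
      omega
    obtain ⟨p, q⟩ := hA x (hX.1 hx)
    have hd : X.gcd id ∣ x := Finset.gcd_dvd hx
    rw [aux_sum_moebius _ _ (Nat.pos_of_dvd_of_pos hd p) ((Nat.le_of_dvd p hd).trans q)]
    push_cast
    rfl
  rw [Finset.sum_congr rfl e2, Finset.sum_comm]
  refine Finset.sum_congr rfl fun d _ => ?_
  rw [← Finset.card_powersetCard, ← Finset.sum_filter, Finset.sum_const, nsmul_eq_mul, mul_comm]
  congr 3
  ext X
  simp only [Finset.mem_filter, Finset.mem_powersetCard, Finset.dvd_gcd_iff, id,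
    Finset.subset_iff]
  grind
end

section
/- For every integer n > 3, Σ_{d=1}^{n} μ(d) · 2^{⌊n/d⌋ − ⌊(n−3)/d⌋} equals 3 + M(n) if n is even, and equals 4 + M(n) if n is odd. -/
theorem aux_sum (n k : ℕ) (hk : 0 < k) (hkn : k ≤ n) :
    ∑ d ∈ Finset.Icc 1 n, (ArithmeticFunction.moebius d) * (if d ∣ k then (1:ℤ) else 0)
      = if k = 1 then 1 else 0 := by
  have h := ArithmeticFunction.coe_zeta_mul_moebius
  rw [← ArithmeticFunction.one_apply, ← h, ArithmeticFunction.coe_zeta_mul_apply]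
  simp only [mul_ite, mul_one, mul_zero]
  rw [← Finset.sum_filter]
  apply Finset.sum_congr _ (fun _ _ => rfl)
  ext d
  simp only [Finset.mem_filter, Finset.mem_Icc, Nat.mem_divisors]
  constructor
  · rintro ⟨_, h⟩
    exact ⟨h, hk.ne'⟩
  · rintro ⟨h, _⟩
    exact ⟨⟨Nat.pos_of_dvd_of_pos h hk, (Nat.le_of_dvd hk h).trans hkn⟩, h⟩

theorem aux_pt (m d : ℕ) :
    (2:ℤ) ^ ((m + 3) / d - m / d) = 1 + (if d ∣ m + 1 then (1:ℤ) else 0)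
      + (if d ∣ m + 2 then (1:ℤ) else 0) + (if d ∣ m + 3 then (1:ℤ) else 0)
      + 3 * (if d ∣ 1 then (1:ℤ) else 0)
      + (if d ∣ Nat.gcd (m + 1) (m + 3) then (1:ℤ) else 0) := by
  have e : (m + 3) / d - m / d = (if d ∣ m + 1 then 1 else 0)
      + (if d ∣ m + 2 then 1 else 0) + (if d ∣ m + 3 then 1 else 0) := by
    rw [Nat.succ_div (a := m + 2), Nat.succ_div (a := m + 1), Nat.succ_div (a := m)]
    simp only [Nat.add_assoc, Nat.reduceAdd]
    omega
  rw [e]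
  have h12 : d ∣ m + 1 → d ∣ m + 2 → d ∣ 1 := fun h1 h2 => by
    simpa using Nat.dvd_sub h2 h1
  have h23 : d ∣ m + 2 → d ∣ m + 3 → d ∣ 1 := fun h1 h2 => by
    have := Nat.dvd_sub h2 h1
    rwa [show m + 3 - (m + 2) = 1 by omega] at this
  have h1 : d ∣ 1 → d ∣ m + 1 ∧ d ∣ m + 2 ∧ d ∣ m + 3 := fun h =>
    ⟨h.trans (one_dvd _), h.trans (one_dvd _), h.trans (one_dvd _)⟩
  simp only [Nat.dvd_gcd_iff]
  by_cases a : d ∣ m + 1 <;> by_cases b : d ∣ m + 2 <;> by_cases c : d ∣ m + 3 <;>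
    by_cases p : d ∣ 1 <;>
    first
    | (exfalso; tauto)
    | (simp only [a, b, c, p, and_self, and_true, and_false, if_true, if_false]; norm_num)

/-- For `n > 3`: `∑_{d=1}^{n} μ(d) 2^{⌊n/d⌋ - ⌊(n-3)/d⌋}` equals `3 + M(n)` if `n`
is even and `4 + M(n)` if `n` is odd, where `M` is the Mertens function. -/
theorem stmt_14 (n : ℕ) (hn : 3 < n) :
    ∑ d ∈ Finset.Icc 1 n,
        (ArithmeticFunction.moebius d) * 2 ^ (n / d - (n - 3) / d)
      = (if Even n then 3 else 4) + ∑ d ∈ Finset.Icc 1 n, (ArithmeticFunction.moebius d : ℤ) := by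
  obtain ⟨m, rfl⟩ : ∃ m, n = m + 3 := ⟨n - 3, by omega⟩
  simp only [Nat.add_sub_cancel, aux_pt, mul_add, Finset.sum_add_distrib, mul_one,
    mul_left_comm _ (3:ℤ), ← Finset.mul_sum]
  have hg : 0 < Nat.gcd (m + 1) (m + 3) := Nat.gcd_pos_of_pos_left _ (by omega)
  rw [aux_sum _ (m + 1) (by omega) (by omega), aux_sum _ (m + 2) (by omega) (by omega),
    aux_sum _ (m + 3) (by omega) (by omega), aux_sum _ 1 (by omega) (by omega),
    aux_sum _ _ hg ((Nat.gcd_le_left _ (by omega)).trans (by omega))]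
  have hgcd : Nat.gcd (m + 1) (m + 3) = 1 ↔ ¬ Even (m + 3) := by
    rw [show m + 3 = 2 + (m + 1) by omega, Nat.gcd_add_self_right, ← Nat.coprime_iff_gcd_eq_one,
      Nat.coprime_two_right, Nat.odd_iff, Nat.even_iff]
    omega
  rw [if_neg (by omega), if_neg (by omega), if_neg (by omega)]
  by_cases h : Even (m + 3)
  · rw [if_neg (fun q => hgcd.1 q h), if_pos h]
    simp
    ring
  · rw [if_pos (hgcd.2 h), if_neg h]
    simp
    ring
end

section
/- Let m, n be integers with 1 < n < m − 1. Then Σ_{d=1}^{m} μ(d) · 2^{⌊(n+1)/d⌋ − ⌊(n−1)/d⌋ + ⌊m/d⌋ − ⌊(m−1)/d⌋} equals: 2 + M(m) if gcd(m,n) > 1 and gcd(m,n+1) > 1; 3 + M(m) if exactly one of gcd(m,n) = 1 and gcd(m,n+1) = 1 holds; and 4 + M(m) if gcd(m,n) = gcd(m,n+1) = 1. -/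
theorem sum_moebius_dvd (m g : ℕ) (hg : 0 < g) (hgm : g ≤ m) :
    ∑ d ∈ Finset.Icc 1 m, (ArithmeticFunction.moebius d : ℤ) * (if d ∣ g then 1 else 0)
      = if g = 1 then 1 else 0 := by
  have h1 : ∑ d ∈ g.divisors, (ArithmeticFunction.moebius d : ℤ) = if g = 1 then 1 else 0 := by
    rw [← ArithmeticFunction.coe_mul_zeta_apply, ArithmeticFunction.moebius_mul_coe_zeta,
      ArithmeticFunction.one_apply]
  rw [← h1]
  simp only [mul_ite, mul_one, mul_zero]
  rw [← Finset.sum_filter]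
  apply Finset.sum_congr _ (fun _ _ => rfl)
  ext d
  simp only [Finset.mem_filter, Finset.mem_Icc, Nat.mem_divisors]
  constructor
  · rintro ⟨_, h⟩
    exact ⟨h, by omega⟩
  · rintro ⟨h, _⟩
    exact ⟨⟨Nat.pos_of_dvd_of_pos h hg, (Nat.le_of_dvd hg h).trans hgm⟩, h⟩

theorem sum_main (m n : ℕ) (hn : 1 < n) (hm : n < m - 1) :
    ∑ d ∈ Finset.Icc 1 m,
          (ArithmeticFunction.moebius d) *
            2 ^ ((n + 1) / d - (n - 1) / d + m / d - (m - 1) / d)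
      = 2 + (if Nat.gcd m n = 1 then 1 else 0) + (if Nat.gcd m (n + 1) = 1 then 1 else 0)
        + ∑ d ∈ Finset.Icc 1 m, (ArithmeticFunction.moebius d : ℤ) := by
  have hc : Nat.gcd n (n + 1) = 1 := by simp
  have e1 := sum_moebius_dvd m n (by omega) (by omega)
  have e2 := sum_moebius_dvd m (n + 1) (by omega) (by omega)
  have e3 := sum_moebius_dvd m m (by omega) (by omega)
  have e4 := sum_moebius_dvd m 1 (by omega) (by omega)
  have e5 := sum_moebius_dvd m (Nat.gcd m n) (Nat.gcd_pos_of_pos_left _ (by omega))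
    (Nat.gcd_le_left _ (by omega))
  have e6 := sum_moebius_dvd m (Nat.gcd m (n + 1)) (Nat.gcd_pos_of_pos_left _ (by omega))
    (Nat.gcd_le_left _ (by omega))
  rw [if_neg (by omega)] at e1 e2 e3
  rw [if_pos rfl] at e4
  have key : ∀ d ∈ Finset.Icc 1 m, (ArithmeticFunction.moebius d) *
            2 ^ ((n + 1) / d - (n - 1) / d + m / d - (m - 1) / d)
      = (ArithmeticFunction.moebius d : ℤ)
        + (ArithmeticFunction.moebius d : ℤ) * (if d ∣ n then 1 else 0)
        + (ArithmeticFunction.moebius d : ℤ) * (if d ∣ n + 1 then 1 else 0)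
        + (ArithmeticFunction.moebius d : ℤ) * (if d ∣ m then 1 else 0)
        + (ArithmeticFunction.moebius d : ℤ) * (if d ∣ 1 then 1 else 0)
        + (ArithmeticFunction.moebius d : ℤ) * (if d ∣ 1 then 1 else 0)
        + (ArithmeticFunction.moebius d : ℤ) * (if d ∣ Nat.gcd m n then 1 else 0)
        + (ArithmeticFunction.moebius d : ℤ) * (if d ∣ Nat.gcd m (n + 1) then 1 else 0) := by
    intro d _
    have hexp : (n + 1) / d - (n - 1) / d + m / d - (m - 1) / d
        = (if d ∣ n then 1 else 0) + (if d ∣ n + 1 then 1 else 0) + (if d ∣ m then 1 else 0) := by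
      obtain ⟨a, rfl⟩ : ∃ a, n = a + 1 := ⟨n - 1, by omega⟩
      obtain ⟨b, rfl⟩ : ∃ b, m = b + 1 := ⟨m - 1, by omega⟩
      have h1 := Nat.succ_div (a := a + 1) (b := d)
      have h2 := Nat.succ_div (a := a) (b := d)
      have h3 := Nat.succ_div (a := b) (b := d)
      simp only [Nat.add_sub_cancel]
      omega
    rw [hexp]
    have h1 : d ∣ 1 ↔ d ∣ n ∧ d ∣ n + 1 := by rw [← Nat.dvd_gcd_iff, hc]
    have h2 : d ∣ n → d ∣ n + 1 → d ∣ m := fun x y => (h1.2 ⟨x, y⟩).trans (one_dvd m)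
    simp only [h1, Nat.dvd_gcd_iff]
    by_cases ha : d ∣ n <;> by_cases hb : d ∣ n + 1 <;> by_cases hd : d ∣ m <;>
      first
        | exact absurd (h2 ha hb) hd
        | (simp [ha, hb, hd] <;> ring)
  rw [Finset.sum_congr rfl key]
  simp only [Finset.sum_add_distrib]
  rw [e1, e2, e3, e4, e5, e6]
  ring

/-- Theorem (b): for `1 < n < m - 1`,
`∑_{d=1}^{m} μ(d) 2^{⌊(n+1)/d⌋ - ⌊(n-1)/d⌋ + ⌊m/d⌋ - ⌊(m-1)/d⌋}` equals
`2 + M(m)`, `3 + M(m)`, or `4 + M(m)` according to the coprimality of `m`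
with `n` and `n+1`, where `M` is the Mertens function. -/
theorem stmt_16 (m n : ℕ) (hn : 1 < n) (hm : n < m - 1) :
    (1 < Nat.gcd m n ∧ 1 < Nat.gcd m (n + 1) →
      ∑ d ∈ Finset.Icc 1 m,
          (ArithmeticFunction.moebius d) *
            2 ^ ((n + 1) / d - (n - 1) / d + m / d - (m - 1) / d)
        = 2 + ∑ d ∈ Finset.Icc 1 m, (ArithmeticFunction.moebius d : ℤ)) ∧
    ((Nat.gcd m n = 1 ∧ 1 < Nat.gcd m (n + 1)) ∨
        (1 < Nat.gcd m n ∧ Nat.gcd m (n + 1) = 1) →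
      ∑ d ∈ Finset.Icc 1 m,
          (ArithmeticFunction.moebius d) *
            2 ^ ((n + 1) / d - (n - 1) / d + m / d - (m - 1) / d)
        = 3 + ∑ d ∈ Finset.Icc 1 m, (ArithmeticFunction.moebius d : ℤ)) ∧
    (Nat.gcd m n = 1 ∧ Nat.gcd m (n + 1) = 1 →
      ∑ d ∈ Finset.Icc 1 m,
          (ArithmeticFunction.moebius d) *
            2 ^ ((n + 1) / d - (n - 1) / d + m / d - (m - 1) / d)
        = 4 + ∑ d ∈ Finset.Icc 1 m, (ArithmeticFunction.moebius d : ℤ)) := by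
  rw [sum_main m n hn hm]
  refine ⟨?_, ?_, ?_⟩
  · rintro ⟨h1, h2⟩
    rw [if_neg (by omega), if_neg (by omega)]
    ring
  · rintro (⟨h1, h2⟩ | ⟨h1, h2⟩)
    · rw [if_pos h1, if_neg (by omega)]
      ring
    · rw [if_neg (by omega), if_pos h2]
      ring
  · rintro ⟨h1, h2⟩
    rw [if_pos h1, if_pos h2]
    ring
end
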